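/- (Erdős–Lax inequality) Let P be a complex polynomial of degree n ≥ 1 that does not vanish in |z| < 1. Then max_{|z|=1}|P′(z)| ≤ (n/2)·max_{|z|=1}|P(z)|. -/

import Mathlib

open Polynomial Metric

/-- The maximum of `|P(z)|` over the circle `|z| = r`. -/
noncomputable def maxMod (P : Polynomial ℂ) (r : ℝ) : ℝ :=
  ⨆ z : sphere (0 : ℂ) r, ‖P.eval (z : ℂ)‖

/-!
Let `n` be the degree of `P` and `M` its maximum modulus on `|z| = r`. Two estimates hold at every
point of this circle.

* If `P` has no root in `|w| < r`, then `z P'(z) / P(z) = ∑ z / (z - w)`, summed over the `n` roots,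
  has real part at most `n / 2`, so it is closer to `0` than to `n`: `|z P'| ≤ |n P - z P'|`.
* For `|l| > M` the polynomial `P - l` has no root in `|w| < r`. The first estimate, applied to it,
  says that `n l` is at distance at least `|z P'|` from `n P - z P'`. Hence the disc with centre
  `n P - z P'` and radius `|z P'|` lies in `|v| ≤ n M`, which means `|n P - z P'| + |z P'| ≤ n M`.

Adding them gives `2 |z P'| ≤ n M`.
-/

theorem dist_add_le_of_ball_subset_closedBall {E : Type*} [NormedAddCommGroup E] [NormedSpace ℝ E]
    [Nontrivial E] {a c : E} {ε R : ℝ} (hε : 0 < ε) (h : ball a ε ⊆ closedBall c R) :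
    dist a c + ε ≤ R := by
  obtain ⟨v, hv, hray⟩ : ∃ v : E, ‖v‖ = ε ∧ SameRay ℝ (a - c) v := by
    rcases eq_or_ne (a - c) 0 with hac | hac
    · obtain ⟨v, hv⟩ := exists_norm_eq E hε.le
      exact ⟨v, hv, hac ▸ SameRay.zero_left v⟩
    · refine ⟨(ε / ‖a - c‖) • (a - c), ?_, SameRay.sameRay_nonneg_smul_right _ (by positivity)⟩
      rw [norm_smul_of_nonneg (by positivity), div_mul_cancel₀ _ (norm_ne_zero_iff.2 hac)]
  have hmem : a + v ∈ closedBall c R := by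
    refine closure_minimal h isClosed_closedBall ?_
    simp [closure_ball a hε.ne', hv]
  calc dist a c + ε = ‖a - c + v‖ := by rw [hray.norm_add, hv, dist_eq_norm]
    _ = dist (a + v) c := by rw [dist_eq_norm, sub_add_eq_add_sub]
    _ ≤ R := hmem

theorem norm_le_norm_ofReal_sub_iff {x : ℝ} {s : ℂ} :
    ‖s‖ ≤ ‖(x : ℂ) - s‖ ↔ 2 * (x * s.re) ≤ x ^ 2 := by
  rw [← sq_le_sq₀ (norm_nonneg _) (norm_nonneg _), Complex.sq_norm, Complex.sq_norm,
    Complex.normSq_sub, Complex.normSq_ofReal, Complex.re_ofReal_mul, Complex.conj_re]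
  constructor <;> intro h <;> linarith

theorem re_div_sub_le_half {z w : ℂ} (h : ‖z‖ ≤ ‖w‖) : (z / (z - w)).re ≤ 1 / 2 := by
  rcases eq_or_ne z w with rfl | hzw
  · simp
  have hcompl : (1 : ℝ) - z / (z - w) = -w / (z - w) := by
    field_simp [sub_ne_zero.2 hzw]
    push_cast
    ring
  have hcloser : ‖z / (z - w)‖ ≤ ‖((1 : ℝ) : ℂ) - z / (z - w)‖ := by
    rw [hcompl, norm_div, norm_div, norm_neg]
    gcongr
  linarith [norm_le_norm_ofReal_sub_iff.1 hcloser]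

section MaxMod

variable {P : ℂ[X]} {r : ℝ}

theorem norm_eval_le_maxMod_of_norm_eq {z : ℂ} (hz : ‖z‖ = r) : ‖P.eval z‖ ≤ maxMod P r :=
  le_ciSup (f := fun v : sphere (0 : ℂ) r => ‖P.eval (v : ℂ)‖)
    (isCompact_range (by fun_prop)).bddAbove ⟨z, mem_sphere_zero_iff_norm.2 hz⟩

theorem norm_eval_le_maxMod {z : ℂ} (hz : ‖z‖ ≤ r) : ‖P.eval z‖ ≤ maxMod P r := by
  rcases hz.eq_or_lt with hz | hz
  · exact norm_eval_le_maxMod_of_norm_eq hz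
  · refine Complex.norm_le_of_forall_mem_frontier_norm_le isBounded_ball
      P.differentiable.diffContOnCl (fun v hv => ?_)
      (subset_closure (mem_ball_zero_iff.2 hz))
    exact norm_eval_le_maxMod_of_norm_eq
      (mem_sphere_zero_iff_norm.1 (frontier_ball_subset_sphere hv))

theorem maxMod_le {C : ℝ} (hr : 0 ≤ r) (h : ∀ z : ℂ, ‖z‖ = r → ‖P.eval z‖ ≤ C) :
    maxMod P r ≤ C :=
  have : Nonempty (sphere (0 : ℂ) r) := (NormedSpace.sphere_nonempty.2 hr).to_subtype
  ciSup_le fun z => h z (mem_sphere_zero_iff_norm.1 z.2)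

theorem maxMod_X_mul (hr : 0 ≤ r) : maxMod (X * P) r = r * maxMod P r := by
  simp only [maxMod, Real.mul_iSup_of_nonneg hr, eval_mul, eval_X, norm_mul, norm_eq_of_mem_sphere]

end MaxMod

/-- The polar derivative `n P - X P'` of a polynomial `P` of degree `n`, with pole at the origin.
At a point `z` of the unit circle it has the same modulus as `Q'(1 / z)` for the reciprocal
polynomial `Q = Xⁿ P(1 / X)`, and it takes the place of `Q'` in the classical argument. -/
noncomputable def polarDerivative {R : Type*} [Ring R] (P : R[X]) : R[X] :=
  (P.natDegree : R[X]) * P - X * derivative P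

theorem polarDerivative_sub_C {R : Type*} [Ring R] (P : R[X]) (l : R) :
    polarDerivative (P - C l) = polarDerivative P - (P.natDegree : R[X]) * C l := by
  simp only [polarDerivative, natDegree_sub_C, derivative_sub, derivative_C, sub_zero, mul_sub]
  abel

section PolarDerivative

variable {P : ℂ[X]} {z : ℂ}

theorem re_mul_derivative_div_le (hroots : ∀ w, P.IsRoot w → ‖z‖ ≤ ‖w‖) (hz : P.eval z ≠ 0) :
    (z * ((derivative P).eval z / P.eval z)).re ≤ P.natDegree / 2 := by
  have hsplits := IsAlgClosed.splits P
  calc (z * ((derivative P).eval z / P.eval z)).re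
      = (P.roots.map fun w => (z / (z - w)).re).sum := by
        rw [hsplits.eval_derivative_div_eval_of_ne_zero hz, ← Multiset.sum_map_mul_left,
          ← Complex.coe_reAddGroupHom, map_multiset_sum, Multiset.map_map]
        simp [div_eq_mul_inv]
    _ ≤ (P.roots.map fun _ => (1 / 2 : ℝ)).sum :=
        Multiset.sum_map_le_sum_map _ _ fun w hw =>
          re_div_sub_le_half (hroots w (isRoot_of_mem_roots hw))
    _ = P.natDegree / 2 := by
        simp [hsplits.natDegree_eq_card_roots, div_eq_mul_inv]

theorem norm_mul_derivative_le_norm_polarDerivative (hroots : ∀ w, P.IsRoot w → ‖z‖ ≤ ‖w‖) :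
    ‖z * (derivative P).eval z‖ ≤ ‖(polarDerivative P).eval z‖ := by
  rcases eq_or_ne (P.eval z) 0 with hz | hz
  · simp [polarDerivative, hz]
  set s := z * ((derivative P).eval z / P.eval z) with hs
  have hderiv : z * (derivative P).eval z = s * P.eval z := by
    rw [hs, mul_assoc, div_mul_cancel₀ _ hz]
  have hpolar : (polarDerivative P).eval z = ((P.natDegree : ℝ) - s) * P.eval z := by
    simp [polarDerivative, hderiv, sub_mul]
  have hcloser : ‖s‖ ≤ ‖((P.natDegree : ℝ) : ℂ) - s‖ := by
    rw [norm_le_norm_ofReal_sub_iff]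
    nlinarith [re_mul_derivative_div_le hroots hz, (P.natDegree.cast_nonneg : (0 : ℝ) ≤ _)]
  calc ‖z * (derivative P).eval z‖ = ‖s‖ * ‖P.eval z‖ := by rw [hderiv, norm_mul]
    _ ≤ ‖((P.natDegree : ℝ) : ℂ) - s‖ * ‖P.eval z‖ := by gcongr
    _ = ‖(polarDerivative P).eval z‖ := by rw [hpolar, norm_mul]

theorem norm_mul_derivative_le_dist_polarDerivative {l : ℂ} (hl : maxMod P ‖z‖ < ‖l‖) :
    ‖z * (derivative P).eval z‖ ≤ dist (P.natDegree * l) ((polarDerivative P).eval z) := by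
  have hroots : ∀ w, (P - C l).IsRoot w → ‖z‖ ≤ ‖w‖ := by
    intro w hw
    have hPw : P.eval w = l := by simpa [sub_eq_zero] using hw
    contrapose! hl
    exact hPw ▸ norm_eval_le_maxMod hl.le
  simpa [polarDerivative_sub_C, dist_comm, dist_eq_norm] using
    norm_mul_derivative_le_norm_polarDerivative hroots

theorem ball_polarDerivative_subset_closedBall (hn : P.natDegree ≠ 0) :
    ball ((polarDerivative P).eval z) ‖z * (derivative P).eval z‖
      ⊆ closedBall 0 (P.natDegree * maxMod P ‖z‖) := by
  intro v hv
  have hn' : (P.natDegree : ℂ) ≠ 0 := Nat.cast_ne_zero.2 hn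
  rw [mem_closedBall_zero_iff]
  by_contra! hlt
  have hl : maxMod P ‖z‖ < ‖v / P.natDegree‖ := by
    rw [norm_div, Complex.norm_natCast, lt_div_iff₀ (by positivity)]
    linarith
  have hdist := norm_mul_derivative_le_dist_polarDerivative hl
  rw [mul_div_cancel₀ _ hn'] at hdist
  exact hdist.not_gt hv

theorem norm_polarDerivative_add_norm_mul_derivative_le :
    ‖(polarDerivative P).eval z‖ + ‖z * (derivative P).eval z‖ ≤ P.natDegree * maxMod P ‖z‖ := by
  rcases eq_or_ne (z * (derivative P).eval z) 0 with hz | hz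
  · have hPz : ‖P.eval z‖ ≤ maxMod P ‖z‖ := norm_eval_le_maxMod le_rfl
    simp only [polarDerivative, eval_sub, eval_mul, eval_natCast, eval_X, hz, sub_zero, norm_zero,
      add_zero, norm_mul, Complex.norm_natCast]
    gcongr
  · have hn : P.natDegree ≠ 0 := fun hn => hz (by simp [derivative_of_natDegree_zero hn])
    simpa using dist_add_le_of_ball_subset_closedBall (norm_pos_iff.2 hz)
      (ball_polarDerivative_subset_closedBall hn)

end PolarDerivative

theorem stmt_13_general {r : ℝ} (hr : 0 ≤ r) (P : ℂ[X]) (hroots : ∀ w, P.IsRoot w → r ≤ ‖w‖) :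
    r * maxMod (derivative P) r ≤ P.natDegree / 2 * maxMod P r := by
  rw [← maxMod_X_mul hr]
  refine maxMod_le hr fun z hz => ?_
  subst hz
  have hle := norm_mul_derivative_le_norm_polarDerivative hroots
  have hsum := norm_polarDerivative_add_norm_mul_derivative_le (P := P) (z := z)
  rw [eval_mul, eval_X]
  linarith

theorem stmt_13 (n : ℕ) (hn : 1 ≤ n) (P : Polynomial ℂ) (hdeg : P.natDegree = n)
    (hroots : ∀ w : ℂ, P.IsRoot w → 1 ≤ ‖w‖) :
    maxMod (Polynomial.derivative P) 1 ≤ ((n : ℝ) / 2) * maxMod P 1 := by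
  simpa [hdeg] using stmt_13_general zero_le_one P hroots
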